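/- arXiv:2209.01742 — 2 statements merged into one kernel-verified Lean document; each statement's English description precedes it below -/
import Mathlib

section
/- Let p be an odd prime. For every integer n ≥ 1, in the polynomial ring R = (ZMod p)[v₂, v₃, t₁] one has the exact identity η(σ_n) − σ_n = v₂^{p^{2n−2}}·t₁^{p^{2n}} − v₂^{a_{2n−1}}·t₁, where σ_n = Σ_{k=0}^{n−1} v₂^{p^{2k}·a_{2n−2k−1} − p^{2k+1}}·v₃^{p^{2k}}. (This is the congruence d₀(σ_n) ≡ v₂^{p^{2n−2}} t₁^{p^{2n}} − v₂^{a_{2n−1}} t₁ mod I₂ of the paper's Lemma 4.3, made exact in the free model of E(3)_*(E(3))/I₂ where the right unit sends v₃ to v₃ + v₂ t₁^{p²} − v₂^p t₁.) -/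
open MvPolynomial

/-- The Miller–Ravenel–Wilson exponents `a_n` for the prime `p`. -/
def mrwA (p n : ℕ) : ℕ :=
  if n = 0 then 1
  else if n % 2 = 1 then p ^ n + (p ^ (n - 1) - 1) / (p + 1)
  else p ^ n + p * ((p ^ (n - 2) - 1) / (p + 1))

/-- The polynomial ring `R = (ZMod p)[v₂, v₃, t₁]`; `X 0 = v₂`, `X 1 = v₃`, `X 2 = t₁`. -/
abbrev R (p : ℕ) := MvPolynomial (Fin 3) (ZMod p)

/-- The reduction mod `I₂` of the right unit: `η(v₂) = v₂`, `η(t₁) = t₁`,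
`η(v₃) = v₃ + v₂·t₁^{p²} − v₂^p·t₁`. -/
noncomputable def eta (p : ℕ) : R p →ₐ[ZMod p] R p :=
  aeval ![X 0, X 1 + X 0 * X 2 ^ (p ^ 2) - X 0 ^ p * X 2, X 2]

/-- `σ_n = Σ_{k=0}^{n−1} v₂^{p^{2k}·a_{2n−2k−1} − p^{2k+1}}·v₃^{p^{2k}}`. -/
noncomputable def sigma (p n : ℕ) : R p :=
  ∑ k ∈ Finset.range n,
    X 0 ^ (p ^ (2 * k) * mrwA p (2 * n - 2 * k - 1) - p ^ (2 * k + 1)) * X 1 ^ (p ^ (2 * k))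

theorem mrwA_one (p : ℕ) : mrwA p 1 = p := by
  simp [mrwA]

theorem mrwA_odd_mul (p m : ℕ) (hp : 1 ≤ p) :
    (p + 1) * mrwA p (2 * m + 1) + 1 = (p + 1) * p ^ (2 * m + 1) + p ^ (2 * m) := by
  have hdvd : p + 1 ∣ p ^ (2 * m) - 1 := by
    have h := Nat.sub_dvd_pow_sub_pow (p ^ 2) 1 m
    rw [one_pow, ← pow_mul] at h
    refine dvd_trans ⟨p - 1, ?_⟩ h
    simpa using Nat.sq_sub_sq p 1
  have hpos : 1 ≤ p ^ (2 * m) := Nat.one_le_pow _ _ hp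
  have hA : mrwA p (2 * m + 1) = p ^ (2 * m + 1) + (p ^ (2 * m) - 1) / (p + 1) := by
    simp [mrwA, Nat.add_mod]
  rw [hA, mul_add, Nat.mul_div_cancel' hdvd]
  omega

theorem mrwA_odd_succ (p m : ℕ) (hp : 1 ≤ p) :
    mrwA p (2 * (m + 1) + 1) + 1 = p ^ 2 * mrwA p (2 * m + 1) + p := by
  have h₀ := mrwA_odd_mul p m hp
  have h₁ := mrwA_odd_mul p (m + 1) hp
  apply Nat.eq_of_mul_eq_mul_left (Nat.succ_pos p)
  zify at h₀ h₁ ⊢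
  linear_combination h₁ - (p : ℤ) ^ 2 * h₀

theorem le_mrwA_odd (p m : ℕ) : p ≤ mrwA p (2 * m + 1) := by
  have hA : p ^ (2 * m + 1) ≤ mrwA p (2 * m + 1) := by
    simp [mrwA, Nat.add_mod]
  exact (Nat.le_self_pow (by omega) p).trans hA

theorem sigma_succ (p n : ℕ) [Fact p.Prime] :
    sigma p (n + 1) = X 0 ^ (mrwA p (2 * n + 1) - p) * X 1 + sigma p n ^ p ^ 2 := by
  rw [sigma, sigma, Finset.sum_range_succ', sum_pow_char_pow, add_comm]
  congr 1
  · simp [show 2 * (n + 1) - 1 = 2 * n + 1 by omega]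
  · refine Finset.sum_congr rfl fun k _ => ?_
    rw [mul_pow, ← pow_mul, ← pow_mul, Nat.sub_mul,
      show 2 * (n + 1) - 2 * (k + 1) - 1 = 2 * n - 2 * k - 1 by omega]
    congr 3 <;> ring_nf

theorem eta_sigma_succ_sub (p n : ℕ) [Fact p.Prime] :
    eta p (sigma p (n + 1)) - sigma p (n + 1) =
      X 0 ^ (mrwA p (2 * n + 1) - p) * (X 0 * X 2 ^ p ^ 2 - X 0 ^ p * X 2) +
        (eta p (sigma p n) - sigma p n) ^ p ^ 2 := by
  have h₀ : eta p (X 0) = X 0 := by simp [eta]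
  have h₁ : eta p (X 1) = X 1 + X 0 * X 2 ^ (p ^ 2) - X 0 ^ p * X 2 := by simp [eta]
  rw [sigma_succ, sub_pow_char_pow, map_add, map_mul, map_pow, map_pow, h₀, h₁]
  ring

theorem eta_sigma_sub (p n : ℕ) [Fact p.Prime] :
    eta p (sigma p (n + 1)) - sigma p (n + 1) =
      X 0 ^ p ^ (2 * n) * X 2 ^ p ^ (2 * n + 2) - X 0 ^ mrwA p (2 * n + 1) * X 2 := by
  have hp : p.Prime := Fact.out
  induction n with
  | zero =>
    rw [eta_sigma_succ_sub]
    simp [sigma, mrwA_one, hp.ne_zero]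
  | succ n ih =>
    rw [eta_sigma_succ_sub, ih, sub_pow_char_pow]
    have hle := le_mrwA_odd p (n + 1)
    have hsucc := mrwA_odd_succ p n hp.one_le
    obtain ⟨d, hd⟩ := Nat.exists_eq_add_of_le hle
    have hd' : mrwA p (2 * n + 1) * p ^ 2 = d + 1 := by
      rw [mul_comm]; omega
    simp only [mul_pow, ← pow_mul, hd, hd', Nat.add_sub_cancel_left]
    ring

theorem stmt_4 (p : ℕ) (hp : p.Prime) (hodd : Odd p) (n : ℕ) (hn : 1 ≤ n) :
    eta p (sigma p n) - sigma p n =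
      X 0 ^ (p ^ (2 * n - 2)) * X 2 ^ (p ^ (2 * n)) - X 0 ^ (mrwA p (2 * n - 1)) * X 2 := by
  have : Fact p.Prime := ⟨hp⟩
  obtain ⟨m, rfl⟩ := Nat.exists_eq_add_of_le' hn
  exact eta_sigma_sub p m
end

section
/- Let p be an odd prime and k ≥ 0 an integer. In the polynomial ring ℤ[x, y], one has the congruence (x + y)^{p^{k+1}} ≡ x^{p^{k+1}} + y^{p^{k+1}} + Σ_{j=1}^{p−1} C(p, j)·x^{j·p^k}·y^{(p−j)·p^k} modulo the ideal p²·ℤ[x, y], where C(p, j) denotes the binomial coefficient. (Equivalently, the cobar differential of t₁^{p^{k+1}} satisfies d₁(t₁^{p^{k+1}}) ≡ −p·b_{1,k} mod p², where b_{1,k} = Σ_{j=1}^{p−1} (1/p)C(p,j)·t₁^{j p^k} ⊗ t₁^{(p−j) p^k}.) -/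
open MvPolynomial

/-- The binomial theorem with the two extreme terms split off. -/
theorem add_pow_eq_add_sum_Ico {R : Type*} [CommSemiring R] (a b : R) {n : ℕ} (hn : 0 < n) :
    (a + b) ^ n = a ^ n + b ^ n +
      ∑ j ∈ Finset.Ico 1 n, (n.choose j : R) * a ^ j * b ^ (n - j) := by
  rw [add_pow, Finset.sum_range_succ, Finset.range_eq_Ico, Finset.sum_eq_sum_Ico_succ_bot hn]
  have h : ∀ j ∈ Finset.Ico 1 n, a ^ j * b ^ (n - j) * (n.choose j : R) =
      (n.choose j : R) * a ^ j * b ^ (n - j) := fun j _ => by ring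
  rw [zero_add, Finset.sum_congr rfl h]
  simp only [pow_zero, one_mul, Nat.sub_zero, Nat.choose_zero_right, Nat.cast_one, mul_one,
    Nat.sub_self, Nat.choose_self]
  ring

/-- Modulo `p ^ 2`, the power `(a + b) ^ p ^ (k + 1)` only depends on `a ^ p ^ k` and
`b ^ p ^ k`. -/
theorem sq_dvd_add_pow_prime_pow_succ_sub {R : Type*} [CommRing R] {p : ℕ} (hp : p.Prime)
    (a b : R) (k : ℕ) :
    (p : R) ^ 2 ∣ (a + b) ^ p ^ (k + 1) - (a ^ p ^ k + b ^ p ^ k) ^ p := by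
  obtain ⟨r, hr⟩ := exists_add_pow_prime_pow_eq hp a b k
  have h : (p : R) ∣ (a + b) ^ p ^ k - (a ^ p ^ k + b ^ p ^ k) :=
    ⟨a * b * r, by rw [hr]; ring⟩
  rw [pow_succ p k, pow_mul]
  simpa only [pow_one, Nat.reduceAdd] using dvd_sub_pow_of_dvd_sub h 1

theorem stmt_6 (p : ℕ) (hp : p.Prime) (hodd : Odd p) (k : ℕ) :
    (X 0 + X 1 : MvPolynomial (Fin 2) ℤ) ^ (p ^ (k + 1)) -
        (X 0 ^ (p ^ (k + 1)) + X 1 ^ (p ^ (k + 1)) +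
          ∑ j ∈ Finset.Ico 1 p,
            (p.choose j : MvPolynomial (Fin 2) ℤ) * X 0 ^ (j * p ^ k) * X 1 ^ ((p - j) * p ^ k)) ∈
      Ideal.span {((p : MvPolynomial (Fin 2) ℤ) ^ 2)} := by
  have h := sq_dvd_add_pow_prime_pow_succ_sub hp
    (X 0 : MvPolynomial (Fin 2) ℤ) (X 1) k
  rw [add_pow_eq_add_sum_Ico _ _ hp.pos] at h
  simp only [← pow_mul, ← pow_succ] at h
  simpa only [Ideal.mem_span_singleton, mul_comm _ (p ^ k)] using h
end
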